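/- Let σ ∈ (0,2) and α ∈ (0,1). For every ε > 0 there is a constant C(ε) < ∞ (depending also on n, σ, α) such that for every u ∈ L^∞(ℝ^n) with ‖u‖*_{C^{σ+α}(B_1)} < ∞ one has |u|*_{σ,B_1} ≤ ε ‖u‖*_{C^{σ+α}(B_1)} + C(ε) ‖u‖_{L^∞(ℝ^n)}. -/

import Mathlib

open MeasureTheory Metric Set Function
noncomputable section

abbrev Rn (n : ℕ) : Type := EuclideanSpace ℝ (Fin n)
abbrev Mat (n : ℕ) : Type := Matrix (Fin n) (Fin n) ℝ

attribute [local instance] Matrix.normedAddCommGroup Matrix.normedSpace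

def deltaOp {n : ℕ} (u : Rn n → ℝ) (x y : Rn n) : ℝ := u (x + y) + u (x - y) - 2 * u x

def HasFiniteSigma {n : ℕ} (σ : ℝ) (u : Rn n → ℝ) (x : Rn n) : Prop :=
  Integrable (fun y : Rn n => |deltaOp u x y| * (2 - σ) / ‖y‖ ^ ((n : ℝ) + σ))

def Dsig {n : ℕ} (σ : ℝ) (ρ : Rn n → Rn n → ℝ) (u : Rn n → ℝ) (x : Rn n) : Mat n :=
  Matrix.of fun i j => ∫ y : Rn n,
    deltaOp u x y * ((2 - σ) * y i * y j * ρ x y) / ‖y‖ ^ ((n : ℝ) + σ + 2)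

structure IsWeight {n : ℕ} (ρ : Rn n → Rn n → ℝ) (lρ Lρ : ℝ) : Prop where
  pos : 0 < lρ
  le : lρ ≤ Lρ
  smooth : ContDiff ℝ (⊤ : ℕ∞) (uncurry ρ)
  lower : ∀ x y, lρ ≤ ρ x y
  upper : ∀ x y, ρ x y ≤ Lρ

structure IsNiceWeight {n : ℕ} (ρ : Rn n → Rn n → ℝ) (lρ Lρ : ℝ) (M : ℕ → ℝ)
    extends IsWeight ρ lρ Lρ : Prop where
  decay : ∀ (k : ℕ) (x y : Rn n), ‖iteratedFDeriv ℝ k (fun z => ρ x z) y‖ * ‖y‖ ^ k ≤ M k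

def UniformlyElliptic {n : ℕ} (F : Mat n → Rn n → ℝ) (lam Lam : ℝ) : Prop :=
  ∀ (M : Mat n), M.IsSymm → ∀ x ∈ ball (0 : Rn n) 1, ∀ (N : Mat n), N.PosSemidef →
    lam * ‖N‖ ≤ F (M + N) x - F M x ∧ F (M + N) x - F M x ≤ Lam * ‖N‖

def ConcaveInMatrix {n : ℕ} (F : Mat n → Rn n → ℝ) : Prop :=
  ∀ x ∈ ball (0 : Rn n) 1, ConcaveOn ℝ {M : Mat n | M.IsSymm} (fun M => F M x)

structure IsClassicalSolution {n : ℕ} (σ : ℝ) (ρ : Rn n → Rn n → ℝ) (F : Mat n → Rn n → ℝ)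
    (f g u : Rn n → ℝ) : Prop where
  bdd : ∃ K, ∀ x, |u x| ≤ K
  boundary : ∀ x, x ∉ ball (0 : Rn n) 1 → u x = g x
  finite : ∀ x ∈ ball (0 : Rn n) 1, HasFiniteSigma σ u x
  eqn : ∀ x ∈ ball (0 : Rn n) 1, F (Dsig σ ρ u x) x = f x

def CHolder {E G : Type*} [NormedAddCommGroup E] [NormedSpace ℝ E]
    [NormedAddCommGroup G] [NormedSpace ℝ G] (C s : ℝ) (u : E → G) (Ω : Set E) : Prop :=
  ContDiffOn ℝ (⌈s⌉₊ - 1 : ℕ) u Ω ∧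
  (∀ j ≤ ⌈s⌉₊ - 1, ∀ x ∈ Ω, ‖iteratedFDerivWithin ℝ j u Ω x‖ ≤ C) ∧
  ∀ x ∈ Ω, ∀ x' ∈ Ω,
    ‖iteratedFDerivWithin ℝ (⌈s⌉₊ - 1) u Ω x - iteratedFDerivWithin ℝ (⌈s⌉₊ - 1) u Ω x'‖ ≤
      C * ‖x - x'‖ ^ (s - (⌈s⌉₊ - 1 : ℕ))

/-- The scaled `σ`-seminorm `|u|*_{σ,B₁} = sup_{x∈B₁} d(x)^σ ∫ |δu(x,y)| (2-σ)/|y|^{n+σ} dy`,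
with `d(x) = 1 - ‖x‖` the distance to `∂B₁`. -/
def scaledSigmaSemi {n : ℕ} (σ : ℝ) (u : Rn n → ℝ) : ℝ :=
  ⨆ x : ↥(ball (0 : Rn n) 1), (1 - ‖(x : Rn n)‖) ^ σ *
    ∫ y : Rn n, |deltaOp u (x : Rn n) y| * (2 - σ) / ‖y‖ ^ ((n : ℝ) + σ)

def supNorm {n : ℕ} (u : Rn n → ℝ) : ℝ := ⨆ x : Rn n, |u x|

/-- `d(x)^j |D^j u(x)|` for `x ∈ B₁`. -/
def scaledDerivTerm {n : ℕ} (u : Rn n → ℝ) (j : ℕ) (x : ↥(ball (0 : Rn n) 1)) : ℝ :=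
  (1 - ‖(x : Rn n)‖) ^ j * ‖iteratedFDerivWithin ℝ j u (ball (0 : Rn n) 1) (x : Rn n)‖

/-- `min(d(x),d(x'))^s |D^k u(x) - D^k u(x')| / |x-x'|^γ` for `s = k + γ`, `γ ∈ (0,1]`. -/
def scaledHolderSemiTerm {n : ℕ} (s : ℝ) (u : Rn n → ℝ)
    (p : ↥(ball (0 : Rn n) 1) × ↥(ball (0 : Rn n) 1)) : ℝ :=
  min (1 - ‖(p.1 : Rn n)‖) (1 - ‖(p.2 : Rn n)‖) ^ s *
    ‖iteratedFDerivWithin ℝ (⌈s⌉₊ - 1) u (ball (0 : Rn n) 1) (p.1 : Rn n) -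
      iteratedFDerivWithin ℝ (⌈s⌉₊ - 1) u (ball (0 : Rn n) 1) (p.2 : Rn n)‖ /
    ‖(p.1 : Rn n) - (p.2 : Rn n)‖ ^ (s - (⌈s⌉₊ - 1 : ℕ))

/-- The interior scaled Hölder norm `‖u‖*_{C^s(B₁)}`. -/
def scaledHolderNorm {n : ℕ} (s : ℝ) (u : Rn n → ℝ) : ℝ :=
  (∑ j ∈ Finset.range (⌈s⌉₊ - 1 + 1), ⨆ x : ↥(ball (0 : Rn n) 1), scaledDerivTerm u j x) +
  ⨆ p : ↥(ball (0 : Rn n) 1) × ↥(ball (0 : Rn n) 1), scaledHolderSemiTerm s u p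

theorem aux_delta {n : ℕ} (u : Rn n → ℝ) (x y : Rn n) (H : ℝ)
    (hd : ∀ p ∈ closedBall x ‖y‖, DifferentiableAt ℝ u p)
    (hH : ∀ p ∈ closedBall x ‖y‖, ∀ q ∈ closedBall x ‖y‖, ‖p - q‖ ≤ 2 * ‖y‖ →
      |fderiv ℝ u p y - fderiv ℝ u q y| ≤ H) :
    |deltaOp u x y| ≤ H := by
  have hm : ∀ t ∈ Icc (0:ℝ) 1, x + t • y ∈ closedBall x ‖y‖ ∧ x - t • y ∈ closedBall x ‖y‖ := by
    intro t ht
    have : ‖t • y‖ ≤ ‖y‖ := by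
      rw [norm_smul, Real.norm_eq_abs, abs_of_nonneg ht.1]
      nlinarith [norm_nonneg y, ht.2]
    constructor <;> simpa [mem_closedBall, dist_eq_norm] using this
  have key := norm_image_sub_le_of_norm_deriv_le_segment_01'
    (f := fun t : ℝ => u (x + t • y) + u (x - t • y))
    (f' := fun t : ℝ => fderiv ℝ u (x + t • y) y - fderiv ℝ u (x - t • y) y) (C := H) ?_ ?_
  · have e : deltaOp u x y = (u (x + (1:ℝ) • y) + u (x - (1:ℝ) • y)) -
      (u (x + (0:ℝ) • y) + u (x - (0:ℝ) • y)) := by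
      simp only [deltaOp, one_smul, zero_smul, add_zero, sub_zero]; ring
    rw [e]; exact key
  · intro t ht
    obtain ⟨h1, h2⟩ := hm t ht
    have a1 : HasDerivAt (fun t : ℝ => x + t • y) y t := by
      simpa using ((hasDerivAt_id t).smul_const y).const_add x
    have a2 : HasDerivAt (fun t : ℝ => x - t • y) (-y) t := by
      simpa using ((hasDerivAt_id t).smul_const y).const_sub x
    have b1 := (hd _ h1).hasFDerivAt.comp_hasDerivAt t a1
    have b2 := (hd _ h2).hasFDerivAt.comp_hasDerivAt t a2
    have := (b1.add b2).hasDerivWithinAt (s := Icc 0 1)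
    simpa [sub_eq_add_neg, Function.comp_def, Pi.add_def] using this
  · intro t ht
    obtain ⟨h1, h2⟩ := hm t (Ico_subset_Icc_self ht)
    refine hH _ h1 _ h2 ?_
    have : x + t • y - (x - t • y) = (2 * t) • y := by module
    rw [this, norm_smul, Real.norm_eq_abs, abs_of_nonneg (by linarith [ht.1])]
    nlinarith [norm_nonneg y, ht.2]

theorem aux_int_a (n : ℕ) (hn : 1 ≤ n) (p : ℝ) (hp : 0 < (n:ℝ) + p) :
    Integrable (fun z : Rn n => if ‖z‖ ≤ 1 then ‖z‖ ^ p else 0) := by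
  haveI : Nonempty (Fin n) := ⟨⟨0, hn⟩⟩
  have := (integrable_fun_norm_addHaar (volume : Measure (Rn n))
    (f := fun t : ℝ => if t ≤ 1 then t ^ p else 0)).2
  apply this
  have h1 : IntegrableOn (fun t : ℝ => t ^ ((n:ℝ) - 1 + p)) (Ioc 0 1) := by
    rw [← intervalIntegrable_iff_integrableOn_Ioc_of_le zero_le_one]
    exact intervalIntegral.intervalIntegrable_rpow' (by linarith)
  have h2 := h1.integrable_indicator measurableSet_Ioc
  refine (h2.integrableOn (s := Ioi 0)).congr_fun ?_ measurableSet_Ioi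
  intro t ht
  have ht' : 0 < t := ht
  simp only [finrank_euclideanSpace, Fintype.card_fin, smul_eq_mul, indicator, mem_Ioc, ht', true_and]
  split_ifs
  · rw [Real.rpow_add ht', ← Real.rpow_natCast, Nat.cast_sub hn, Nat.cast_one]
  · simp

theorem aux_int_b (n : ℕ) (hn : 1 ≤ n) (p r : ℝ) (hr : 0 < r) (hp : (n:ℝ) + p < 0) :
    Integrable (fun z : Rn n => if r < ‖z‖ then ‖z‖ ^ p else 0) := by
  haveI : Nonempty (Fin n) := ⟨⟨0, hn⟩⟩
  have := (integrable_fun_norm_addHaar (volume : Measure (Rn n))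
    (f := fun t : ℝ => if r < t then t ^ p else 0)).2
  apply this
  have h1 : IntegrableOn (fun t : ℝ => t ^ ((n:ℝ) - 1 + p)) (Ioi r) :=
    integrableOn_Ioi_rpow_of_lt (by linarith) hr
  have h2 := h1.integrable_indicator measurableSet_Ioi
  refine (h2.integrableOn (s := Ioi 0)).congr_fun ?_ measurableSet_Ioi
  intro t ht
  have ht' : 0 < t := ht
  simp only [finrank_euclideanSpace, Fintype.card_fin, smul_eq_mul, indicator, mem_Ioi]
  split_ifs
  · rw [Real.rpow_add ht', ← Real.rpow_natCast, Nat.cast_sub hn, Nat.cast_one]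
  · simp

theorem aux_nn {n : ℕ} (x : ↥(ball (0 : Rn n) 1)) : 0 < 1 - ‖(x : Rn n)‖ := by
  have := x.2
  rw [mem_ball_zero_iff] at this
  linarith

theorem aux_dt_nn {n : ℕ} (u : Rn n → ℝ) (j : ℕ) (x : ↥(ball (0 : Rn n) 1)) :
    0 ≤ scaledDerivTerm u j x := by
  have := aux_nn x
  unfold scaledDerivTerm; positivity

theorem aux_ht_nn {n : ℕ} (s : ℝ) (u : Rn n → ℝ) (p : ↥(ball (0 : Rn n) 1) × ↥(ball (0 : Rn n) 1)) :
    0 ≤ scaledHolderSemiTerm s u p := by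
  have h : 0 < min (1 - ‖(p.1 : Rn n)‖) (1 - ‖(p.2 : Rn n)‖) := lt_min (aux_nn _) (aux_nn _)
  unfold scaledHolderSemiTerm; positivity

theorem aux_N_nn {n : ℕ} (s : ℝ) (u : Rn n → ℝ) : 0 ≤ scaledHolderNorm s u := by
  unfold scaledHolderNorm
  exact add_nonneg (Finset.sum_nonneg fun j _ => Real.iSup_nonneg (aux_dt_nn u j))
    (Real.iSup_nonneg (aux_ht_nn s u))

theorem aux_dt_le {n : ℕ} (s : ℝ) (u : Rn n → ℝ) (j : ℕ) (hj : j ≤ ⌈s⌉₊ - 1)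
    (hb : BddAbove (Set.range (scaledDerivTerm u j))) (x : ↥(ball (0 : Rn n) 1)) :
    scaledDerivTerm u j x ≤ scaledHolderNorm s u := by
  have h1 := le_ciSup hb x
  have h2 := Finset.single_le_sum (f := fun j => ⨆ x : ↥(ball (0 : Rn n) 1), scaledDerivTerm u j x)
    (fun j _ => Real.iSup_nonneg (aux_dt_nn u j)) (Finset.mem_range.2 (Nat.lt_succ_of_le hj))
  have h3 := Real.iSup_nonneg (aux_ht_nn s u)
  unfold scaledHolderNorm
  simp only [Nat.succ_eq_add_one] at h2
  linarith

theorem aux_ht_le {n : ℕ} (s : ℝ) (u : Rn n → ℝ)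
    (hb : BddAbove (Set.range (scaledHolderSemiTerm s u)))
    (p : ↥(ball (0 : Rn n) 1) × ↥(ball (0 : Rn n) 1)) :
    scaledHolderSemiTerm s u p ≤ scaledHolderNorm s u := by
  have h1 := le_ciSup hb p
  have h2 : 0 ≤ ∑ j ∈ Finset.range (⌈s⌉₊ - 1 + 1),
    ⨆ x : ↥(ball (0 : Rn n) 1), scaledDerivTerm u j x :=
    Finset.sum_nonneg fun j _ => Real.iSup_nonneg (aux_dt_nn u j)
  unfold scaledHolderNorm
  linarith

/-- Hölder bound near x, in unscaled form. -/
theorem aux_holder {n : ℕ} (s : ℝ) (hs : 0 < s) (u : Rn n → ℝ)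
    (hb : BddAbove (Set.range (scaledHolderSemiTerm s u))) (d : ℝ) (hd : 0 < d)
    (p q : Rn n) (hp : d ≤ 1 - ‖p‖) (hq : d ≤ 1 - ‖q‖) :
    ‖iteratedFDeriv ℝ (⌈s⌉₊ - 1) u p - iteratedFDeriv ℝ (⌈s⌉₊ - 1) u q‖ ≤
      scaledHolderNorm s u * ‖p - q‖ ^ (s - (⌈s⌉₊ - 1 : ℕ)) / d ^ s := by
  have hpb : p ∈ ball (0 : Rn n) 1 := by rw [mem_ball_zero_iff]; linarith
  have hqb : q ∈ ball (0 : Rn n) 1 := by rw [mem_ball_zero_iff]; linarith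
  by_cases hpq : p = q
  · subst hpq
    have := aux_N_nn s u
    simp only [sub_self, norm_zero]
    positivity
  have h := aux_ht_le s u hb (⟨p, hpb⟩, ⟨q, hqb⟩)
  unfold scaledHolderSemiTerm at h
  simp only at h
  rw [iteratedFDerivWithin_of_isOpen _ isOpen_ball hpb,
    iteratedFDerivWithin_of_isOpen _ isOpen_ball hqb] at h
  have hn : 0 < ‖p - q‖ := norm_pos_iff.2 (sub_ne_zero.2 hpq)
  have hn2 : 0 < ‖p - q‖ ^ (s - (⌈s⌉₊ - 1 : ℕ)) := by positivity
  rw [div_le_iff₀ hn2] at h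
  rw [le_div_iff₀ (by positivity)]
  refine le_trans ?_ h
  rw [mul_comm]
  gcongr
  exact le_min hp hq

theorem aux_near {n : ℕ} (x p y : Rn n) (hy : ‖y‖ ≤ (1 - ‖x‖) / 2) (hp : p ∈ closedBall x ‖y‖) :
    (1 - ‖x‖) / 2 ≤ 1 - ‖p‖ := by
  rw [mem_closedBall, dist_eq_norm] at hp
  have := norm_sub_norm_le p x
  linarith

theorem aux_local (n : ℕ) (σ α : ℝ) (hσ0 : 0 < σ) (hσ2 : σ < 2) (hα0 : 0 < α) (hα1 : α < 1) :
    ∃ β K : ℝ, σ < β ∧ 0 ≤ K ∧ ∀ u : Rn n → ℝ,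
        ContDiffOn ℝ (⌈σ + α⌉₊ - 1 : ℕ) u (ball (0 : Rn n) 1) →
        (∀ j ≤ ⌈σ + α⌉₊ - 1, BddAbove (Set.range (scaledDerivTerm u j))) →
        BddAbove (Set.range (scaledHolderSemiTerm (σ + α) u)) →
        ∀ x : Rn n, ‖x‖ < 1 → ∀ y : Rn n, ‖y‖ ≤ (1 - ‖x‖) / 2 →
          |deltaOp u x y| ≤ K * scaledHolderNorm (σ + α) u * (‖y‖ / (1 - ‖x‖)) ^ β := by
  have hs : 0 < σ + α := by linarith
  have hk : ⌈σ + α⌉₊ - 1 = 0 ∨ ⌈σ + α⌉₊ - 1 = 1 ∨ ⌈σ + α⌉₊ - 1 = 2 := by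
    have : ⌈σ + α⌉₊ ≤ 3 := Nat.ceil_le.2 (by norm_num; linarith)
    omega
  have hγ : (0:ℝ) ≤ σ + α - (⌈σ + α⌉₊ - 1 : ℕ) := by
    have h1 := Nat.ceil_lt_add_one hs.le
    have h2 : 1 ≤ ⌈σ + α⌉₊ := Nat.one_le_ceil_iff.2 hs
    rw [Nat.cast_sub h2]; push_cast; linarith
  generalize hs' : σ + α = s at *
  have hσs : σ < s := by linarith
  rcases hk with hk | hk | hk
  · refine ⟨s, 2 * 2 ^ s, hσs, by positivity, ?_⟩
    intro u _ _ hb x hx y hy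
    have hd : 0 < 1 - ‖x‖ := by linarith
    have hN := aux_N_nn s u
    have key : ∀ p ∈ closedBall x ‖y‖, |u p - u x| ≤
        scaledHolderNorm s u * ‖y‖ ^ s / ((1 - ‖x‖) / 2) ^ s := by
      intro p hp
      have h := aux_holder s hs u hb ((1 - ‖x‖) / 2) (by linarith) p x
        (aux_near x p y hy hp) (by linarith)
      rw [hk] at h
      simp only [Nat.cast_zero, sub_zero, iteratedFDeriv_zero_eq_comp, Function.comp_apply,
        ← map_sub, LinearIsometryEquiv.norm_map, Real.norm_eq_abs] at h
      refine h.trans ?_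
      rw [mem_closedBall, dist_eq_norm] at hp
      gcongr
    have h1 := key (x + y) (by simp)
    have h2 := key (x - y) (by simp)
    have e : deltaOp u x y = (u (x + y) - u x) + (u (x - y) - u x) := by
      unfold deltaOp; ring
    rw [e]
    refine (abs_add_le _ _).trans ((add_le_add h1 h2).trans (le_of_eq ?_))
    rw [Real.div_rpow hd.le (by norm_num), Real.div_rpow (norm_nonneg _) hd.le]
    field_simp
    ring
  · refine ⟨s, 2 ^ (s - 1) * 2 ^ s, hσs, by positivity, ?_⟩
    intro u hu _ hb x hx y hy
    rw [hk] at hu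
    have hd : 0 < 1 - ‖x‖ := by linarith
    have hN := aux_N_nn s u
    have := aux_delta u x y
      ((scaledHolderNorm s u * (2 * ‖y‖) ^ (s - 1) / ((1 - ‖x‖) / 2) ^ s) * ‖y‖) ?_ ?_
    · refine this.trans (le_of_eq ?_)
      rcases eq_or_ne y 0 with rfl | hy0
      · simp [Real.zero_rpow hs.ne']
      have hy' : 0 < ‖y‖ := norm_pos_iff.2 hy0
      have e : ‖y‖ ^ s = ‖y‖ ^ (s - 1) * ‖y‖ := by
        rw [Real.rpow_sub_one hy'.ne']; field_simp
      rw [Real.div_rpow hd.le (by norm_num), Real.div_rpow (norm_nonneg _) hd.le,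
        Real.mul_rpow (by norm_num) (norm_nonneg _), e]
      field_simp
    · intro p hp
      have := aux_near x p y hy hp
      have hpb : p ∈ ball (0 : Rn n) 1 := by rw [mem_ball_zero_iff]; linarith
      exact (hu.differentiableOn (by simp)).differentiableAt (isOpen_ball.mem_nhds hpb)
    · intro p hp q hq hpq
      have h := aux_holder s hs u hb ((1 - ‖x‖) / 2) (by linarith) p q
        (aux_near x p y hy hp) (aux_near x q y hy hq)
      have hγ' : 0 ≤ s - 1 := by rw [hk] at hγ; simpa using hγ
      rw [hk] at h
      have h2 := ContinuousMultilinearMap.le_opNorm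
        (iteratedFDeriv ℝ 1 u p - iteratedFDeriv ℝ 1 u q) (fun _ => y)
      simp only [ContinuousMultilinearMap.sub_apply, iteratedFDeriv_one_apply, Finset.univ_unique,
        Finset.prod_singleton, Real.norm_eq_abs] at h2
      refine h2.trans ?_
      refine mul_le_mul_of_nonneg_right (h.trans ?_) (norm_nonneg y)
      simp only [Nat.cast_one]
      gcongr
  · refine ⟨2, 8, hσ2, by positivity, ?_⟩
    intro u hu hj _ x hx y hy
    have hj2 := aux_dt_le s u 2 hk.ge (hj 2 hk.ge)
    rw [hk] at hu
    have hd : 0 < 1 - ‖x‖ := by linarith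
    have hN := aux_N_nn s u
    have hmem : ∀ p ∈ closedBall x ‖y‖, p ∈ ball (0 : Rn n) 1 := by
      intro p hp
      have := aux_near x p y hy hp
      rw [mem_ball_zero_iff]; linarith
    have hf : ContDiffOn ℝ 1 (fderiv ℝ u) (ball (0 : Rn n) 1) :=
      hu.fderiv_of_isOpen isOpen_ball (by norm_num)
    have hbd : ∀ p ∈ closedBall x ‖y‖, ‖fderiv ℝ (fderiv ℝ u) p‖ ≤
        scaledHolderNorm s u / ((1 - ‖x‖) / 2) ^ 2 := by
      intro p hp
      have h := hj2 ⟨p, hmem p hp⟩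
      unfold scaledDerivTerm at h
      simp only at h
      rw [iteratedFDerivWithin_of_isOpen _ isOpen_ball (hmem p hp),
        ← norm_iteratedFDeriv_fderiv, norm_iteratedFDeriv_one] at h
      rw [le_div_iff₀ (by positivity), mul_comm]
      refine le_trans ?_ h
      have := aux_near x p y hy hp
      gcongr
    have := aux_delta u x y
      (scaledHolderNorm s u / ((1 - ‖x‖) / 2) ^ 2 * (2 * ‖y‖) * ‖y‖) ?_ ?_
    · refine this.trans (le_of_eq ?_)
      rw [Real.rpow_two]
      field_simp
      ring
    · intro p hp
      exact (hu.differentiableOn (by simp)).differentiableAt (isOpen_ball.mem_nhds (hmem p hp))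
    · intro p hp q hq hpq
      have h := (convex_closedBall x ‖y‖).norm_image_sub_le_of_norm_fderiv_le
        (f := fderiv ℝ u) (fun z hz => (hf.differentiableOn (by simp)).differentiableAt
          (isOpen_ball.mem_nhds (hmem z hz))) hbd hq hp
      have h2 := ContinuousLinearMap.le_opNorm (fderiv ℝ u p - fderiv ℝ u q) y
      simp only [ContinuousLinearMap.sub_apply, Real.norm_eq_abs] at h2
      refine h2.trans (mul_le_mul_of_nonneg_right (h.trans ?_) (norm_nonneg y))
      gcongr

set_option maxHeartbeats 1000000 in
/-- interpolation inequality
`|u|*_{σ,B₁} ≤ ε ‖u‖*_{C^{σ+α}(B₁)} + C(ε) ‖u‖_{L^∞(ℝⁿ)}`. -/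
theorem interpolation_scaled_seminorm
    (n : ℕ) (hn : 1 ≤ n) (σ α : ℝ) (hσ0 : 0 < σ) (hσ2 : σ < 2) (hα0 : 0 < α) (hα1 : α < 1)
    (ε : ℝ) (hε : 0 < ε) :
    ∃ C : ℝ, 0 < C ∧
      ∀ u : Rn n → ℝ,
        BddAbove (Set.range fun x : Rn n => |u x|) →
        ContDiffOn ℝ (⌈σ + α⌉₊ - 1 : ℕ) u (ball (0 : Rn n) 1) →
        (∀ j ≤ ⌈σ + α⌉₊ - 1, BddAbove (Set.range (scaledDerivTerm u j))) →
        BddAbove (Set.range (scaledHolderSemiTerm (σ + α) u)) →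
        scaledSigmaSemi σ u ≤ ε * scaledHolderNorm (σ + α) u + C * supNorm u := by
  obtain ⟨β, K, hβ, hK, hloc⟩ := aux_local n σ α hσ0 hσ2 hα0 hα1
  set β' := (σ + β) / 2 with hβ'
  have hA := aux_int_a n hn (β' - (n + σ)) (by linarith)
  have hA0 : 0 ≤ ∫ z : Rn n, (if ‖z‖ ≤ 1 then ‖z‖ ^ (β' - (n + σ)) else 0) :=
    integral_nonneg fun z => by dsimp only; split_ifs <;> positivity
  set A := ∫ z : Rn n, (if ‖z‖ ≤ 1 then ‖z‖ ^ (β' - (n + σ)) else 0) with hAdef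
  have h2σ : 0 < 2 - σ := by linarith
  set e' := ε / ((2 - σ) * (A + 1)) with he'
  have he'0 : 0 < e' := by positivity
  have he'A : (2 - σ) * (e' * A) ≤ ε := by
    have : (2 - σ) * (e' * (A + 1)) = ε := by rw [he']; field_simp
    nlinarith [mul_pos h2σ he'0]
  obtain ⟨r, hr0, hr2, hrK⟩ : ∃ r : ℝ, 0 < r ∧ r ≤ 1 / 2 ∧ K * r ^ (β - β') ≤ e' := by
    have hp : 0 < β - β' := by rw [hβ']; linarith
    have ht : Filter.Tendsto (fun r : ℝ => K * r ^ (β - β')) (nhdsWithin 0 (Ioi 0)) (nhds 0) := by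
      have := ((Real.continuousAt_rpow_const 0 (β - β') (Or.inr hp.le)).tendsto.const_mul K)
      rw [Real.zero_rpow hp.ne', mul_zero] at this
      exact this.mono_left nhdsWithin_le_nhds
    have h1 := ht.eventually (gt_mem_nhds he'0)
    have h2 : ∀ᶠ r : ℝ in nhdsWithin 0 (Ioi 0), r ∈ Ioo (0:ℝ) (1/2) :=
      Ioo_mem_nhdsGT (by norm_num)
    obtain ⟨r, h3, h4⟩ := (h1.and h2).exists
    exact ⟨r, h4.1, h4.2.le, h3.le⟩
  have hB := aux_int_b n hn (-(n + σ)) r hr0 (by linarith)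
  have hB0 : 0 ≤ ∫ z : Rn n, (if r < ‖z‖ then ‖z‖ ^ (-(n + σ)) else 0) :=
    integral_nonneg fun z => by dsimp only; split_ifs <;> positivity
  set B := ∫ z : Rn n, (if r < ‖z‖ then ‖z‖ ^ (-(n + σ)) else 0) with hBdef
  refine ⟨(2 - σ) * (4 * B) + 1, by positivity, ?_⟩
  intro u hub hu hj hb
  have hN := aux_N_nn (σ + α) u
  have hM : ∀ x, |u x| ≤ supNorm u := fun x => le_ciSup hub x
  have hM0 : 0 ≤ supNorm u := (abs_nonneg _).trans (hM 0)
  have hloc' := hloc u hu hj hb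
  set N := scaledHolderNorm (σ + α) u with hNdef
  set M := supNorm u with hMdef
  haveI : Nonempty ↥(ball (0 : Rn n) 1) := ⟨⟨0, by simp⟩⟩
  unfold scaledSigmaSemi
  refine ciSup_le fun x => ?_
  have hd := aux_nn x
  have hx1 : ‖(x : Rn n)‖ < 1 := by linarith
  have hloc'' := hloc' x hx1
  set d := 1 - ‖(x : Rn n)‖ with hddef
  set f : Rn n → ℝ := fun y => |deltaOp u (x : Rn n) y| * (2 - σ) / ‖y‖ ^ ((n : ℝ) + σ) with hf
  have hsc := Measure.integral_comp_smul (volume : Measure (Rn n)) f d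
  rw [finrank_euclideanSpace, Fintype.card_fin, smul_eq_mul, abs_of_pos (by positivity)] at hsc
  have hsc' : d ^ σ * ∫ y, f y = ∫ z, d ^ ((n:ℝ) + σ) * f (d • z) := by
    rw [integral_const_mul, hsc, Real.rpow_add hd, Real.rpow_natCast]
    field_simp
  have hGi : Integrable (fun z : Rn n => (2 - σ) * ((e' * N) * (if ‖z‖ ≤ 1 then ‖z‖ ^ (β' - (n + σ)) else 0)
      + (4 * M) * (if r < ‖z‖ then ‖z‖ ^ (-(n + σ)) else 0))) :=
    ((hA.const_mul _).add (hB.const_mul _)).const_mul _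
  have hmono : ∫ z, d ^ ((n:ℝ) + σ) * f (d • z) ≤ ∫ z : Rn n, (2 - σ) * ((e' * N) * (if ‖z‖ ≤ 1 then ‖z‖ ^ (β' - (n + σ)) else 0)
      + (4 * M) * (if r < ‖z‖ then ‖z‖ ^ (-(n + σ)) else 0)) := by
    refine integral_mono_of_nonneg (Filter.Eventually.of_forall fun z => ?_) hGi
      (Filter.Eventually.of_forall fun z => ?_)
    · simp only [hf, Pi.zero_apply]; positivity
    · simp only [hf]
      have ha0 : 0 ≤ (if ‖z‖ ≤ 1 then ‖z‖ ^ (β' - (n + σ)) else 0) := by split_ifs <;> positivity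
      have hb0 : 0 ≤ (if r < ‖z‖ then ‖z‖ ^ (-(n + σ)) else 0) := by split_ifs <;> positivity
      have hc1 : 0 ≤ e' * N := mul_nonneg he'0.le hN
      have hc2 : 0 ≤ 4 * M := mul_nonneg (by norm_num) hM0
      rcases eq_or_ne z 0 with rfl | hz
      · have : deltaOp u (x : Rn n) (d • 0) = 0 := by simp [deltaOp]; ring
        rw [this]
        simp only [abs_zero, zero_mul, zero_div, mul_zero (d ^ ((n:ℝ) + σ))]
        exact mul_nonneg h2σ.le (add_nonneg (mul_nonneg hc1 ha0) (mul_nonneg hc2 hb0))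
      have hz' : 0 < ‖z‖ := norm_pos_iff.2 hz
      have hnd : ‖d • z‖ = d * ‖z‖ := by rw [norm_smul, Real.norm_eq_abs, abs_of_pos hd]
      have e1 : d ^ ((n:ℝ) + σ) * (|deltaOp u (x : Rn n) (d • z)| * (2 - σ) / ‖d • z‖ ^ ((n:ℝ) + σ))
          = (2 - σ) * (|deltaOp u (x : Rn n) (d • z)| * ‖z‖ ^ (-((n:ℝ) + σ))) := by
        rw [hnd, Real.mul_rpow hd.le hz'.le, Real.rpow_neg hz'.le]
        have := Real.rpow_pos_of_pos hd ((n:ℝ) + σ)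
        have := Real.rpow_pos_of_pos hz' ((n:ℝ) + σ)
        field_simp
      rw [e1]
      refine mul_le_mul_of_nonneg_left ?_ h2σ.le
      rcases le_or_gt ‖z‖ r with hzr | hzr
      · rw [if_pos (by linarith), if_neg (not_lt.2 hzr), mul_zero, add_zero,
          sub_eq_add_neg, Real.rpow_add hz', ← mul_assoc]
        refine mul_le_mul_of_nonneg_right ?_ (by positivity)
        have h := hloc'' (d • z) (by rw [hnd]; nlinarith)
        rw [hnd, mul_div_cancel_left₀ _ hd.ne'] at h
        refine h.trans ?_
        have e2 : ‖z‖ ^ β = ‖z‖ ^ (β - β') * ‖z‖ ^ β' := by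
          rw [← Real.rpow_add hz']; congr 1; ring
        rw [e2]
        have h3 : K * ‖z‖ ^ (β - β') ≤ e' := by
          refine le_trans ?_ hrK
          have : 0 ≤ β - β' := by rw [hβ']; linarith
          gcongr
        calc K * N * (‖z‖ ^ (β - β') * ‖z‖ ^ β') = (K * ‖z‖ ^ (β - β')) * N * ‖z‖ ^ β' := by ring
          _ ≤ e' * N * ‖z‖ ^ β' := by gcongr
      · rw [if_pos hzr]
        refine le_trans ?_ (le_add_of_nonneg_left (mul_nonneg hc1 ha0))
        refine mul_le_mul_of_nonneg_right ?_ (by positivity)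
        unfold deltaOp
        have m1 := abs_le.1 (hM ((x : Rn n) + d • z))
        have m2 := abs_le.1 (hM ((x : Rn n) - d • z))
        have m3 := abs_le.1 (hM (x : Rn n))
        rw [abs_le]; constructor <;> linarith [m1.1, m1.2, m2.1, m2.2, m3.1, m3.2]
  rw [hsc']
  refine hmono.trans ?_
  rw [integral_const_mul, integral_add (hA.const_mul _) (hB.const_mul _), integral_const_mul,
    integral_const_mul, ← hAdef, ← hBdef]
  nlinarith [mul_le_mul_of_nonneg_right he'A hN]
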